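/- Let g be a finite-dimensional simple Lie algebra over the complex numbers ℂ and let κ, λ : g → g be linear maps satisfying condition (kl). Then there exist a scalar c ∈ ℂ and an element q ∈ g such that κ = c·id and λ(x) = c·x + ⁅q, x⁆ for all x ∈ g. Consequently, every Lie affgebra with tangent Lie algebra g is isomorphic to one with affine Lie bracket {a,b} = ⁅a,b⁆ + c·b + s for some c ∈ ℂ and s ∈ g. -/

import Mathlib

/-!
Swapping `a` and `b` in condition (kl) shows that `⁅k a, b⁆ = ⁅a, k b⁆`. The form `⁅a, k b⁆`
measures the failure of `l` to be a derivation, so it is a 2-coboundary. Its cocycle identity,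
combined with the Jacobi identity, puts `k` in the centroid once the centre vanishes. Then `l - k`
is a derivation, hence inner when the Killing form is nondegenerate, and Schur's lemma makes `k` a
scalar on a simple algebra. Writing `l = k + ad q`, the translation `a ↦ a + q` absorbs the `ad q`
part of the affine bracket.
-/

section CommRing

variable {R L : Type*} [CommRing R] [LieRing L] [LieAlgebra R L] {k l : L →ₗ[R] L}

/-- Condition (kl) on a pair of linear endomorphisms of a Lie algebra, which makes them the linear
part of an affine Lie bracket (see `affineBracket`). -/
def ConditionKL (k l : L →ₗ[R] L) : Prop :=
  ∀ a b : L, l ⁅a, b⁆ = ⁅l a, b⁆ - ⁅a, k b⁆ + ⁅a, l b⁆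

namespace ConditionKL

theorem lie_apply_comm (h : ConditionKL k l) (a b : L) : ⁅k a, b⁆ = ⁅a, k b⁆ := by
  have swapped := h b a
  rw [← lie_skew b a, map_neg, h a b, ← lie_skew (l b) a, ← lie_skew b (l a),
    ← lie_skew b (k a)] at swapped
  linear_combination (norm := module) -swapped

theorem lie_lie_apply_cyclic_sum_eq_zero (h : ConditionKL k l) (a b c : L) :
    ⁅a, ⁅b, k c⁆⁆ + ⁅b, ⁅c, k a⁆⁆ + ⁅c, ⁅a, k b⁆⁆ = 0 := by
  -- The defect of the derivation rule for `l` is a coboundary: apply `l` to the Jacobi identity.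
  have cocycle : ⁅a, ⁅b, k c⁆⁆ + ⁅b, ⁅c, k a⁆⁆ + ⁅c, ⁅a, k b⁆⁆ +
      (⁅k a, ⁅b, c⁆⁆ + ⁅k b, ⁅c, a⁆⁆ + ⁅k c, ⁅a, b⁆⁆) = 0 := by
    have l_jacobi := congrArg l (lie_jacobi a b c)
    simp only [map_add, map_zero, h _ _, lie_add, lie_sub, ← h.lie_apply_comm _ ⁅_, _⁆] at l_jacobi
    linear_combination (norm := module) lie_jacobi (l a) b c + lie_jacobi a (l b) c +
      lie_jacobi a b (l c) - l_jacobi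
  have jacobi_sum : ⁅k a, ⁅b, c⁆⁆ + ⁅k b, ⁅c, a⁆⁆ + ⁅k c, ⁅a, b⁆⁆ +
      (2 : ℤ) • (⁅a, ⁅b, k c⁆⁆ + ⁅b, ⁅c, k a⁆⁆ + ⁅c, ⁅a, k b⁆⁆) = 0 := by
    have jacobi_a := lie_jacobi (k a) b c
    have jacobi_b := lie_jacobi a (k b) c
    have jacobi_c := lie_jacobi a b (k c)
    rw [h.lie_apply_comm a b] at jacobi_a
    rw [h.lie_apply_comm b c] at jacobi_b
    rw [h.lie_apply_comm c a] at jacobi_c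
    linear_combination (norm := module) jacobi_a + jacobi_b + jacobi_c
  linear_combination (norm := module) jacobi_sum - cocycle

theorem apply_lie [LieModule.IsFaithful R L L] (h : ConditionKL k l) (a b : L) :
    k ⁅a, b⁆ = ⁅a, k b⁆ := by
  refine LieModule.ext_of_isFaithful (R := R) L fun c => ?_
  calc ⁅k ⁅a, b⁆, c⁆ = ⁅⁅a, b⁆, k c⁆ := h.lie_apply_comm _ _
    _ = ⁅a, ⁅b, k c⁆⁆ + ⁅b, ⁅c, k a⁆⁆ := by
      rw [lie_lie, ← h.lie_apply_comm a c, ← lie_skew (k a) c, lie_neg, sub_neg_eq_add]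
    _ = -⁅c, ⁅a, k b⁆⁆ := eq_neg_of_add_eq_zero_left (h.lie_lie_apply_cyclic_sum_eq_zero a b c)
    _ = ⁅⁅a, k b⁆, c⁆ := lie_skew _ _

/-- The map `k` of condition (kl) as an element of the centroid of `L`, encoded as the type of
endomorphisms of the adjoint module. -/
def centroidHom [LieModule.IsFaithful R L L] (h : ConditionKL k l) : L →ₗ⁅R,L⁆ L where
  toLinearMap := k
  map_lie' := h.apply_lie _ _

/-- The difference `l - k` as a derivation of `L`. -/
def derivation [LieModule.IsFaithful R L L] (h : ConditionKL k l) : LieDerivation R L L where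
  toLinearMap := l - k
  leibniz' a b := by
    simp only [LinearMap.sub_apply, h a b, h.apply_lie, lie_sub, ← h.lie_apply_comm b a]
    rw [← lie_skew (l a) b, ← lie_skew (k b) a]
    abel

end ConditionKL

/-- The affine Lie bracket on the Lie algebra `L` with linear part given by `k` and `l`, and with
`s` as its value at `(0, 0)`. -/
def affineBracket (k l : L →ₗ[R] L) (s a b : L) : L :=
  ⁅a, b⁆ + k a + l (b - a) + s

theorem affineBracket_add_ad_add (k : L →ₗ[R] L) (q s a b : L) :
    affineBracket k (k + LieAlgebra.ad R L q) s a b + q =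
      ⁅a + q, b + q⁆ + k (b + q) + (s + q - k q) := by
  simp only [affineBracket, LinearMap.add_apply, LieAlgebra.ad_apply, map_add, map_sub, lie_add,
    add_lie, lie_self]
  rw [← lie_skew a q]
  abel

end CommRing

section Field

variable {K : Type*} [Field K]

theorem ConditionKL.exists_eq_add_ad {L : Type*} [LieRing L] [LieAlgebra K L] [Module.Finite K L]
    [LieAlgebra.IsKilling K L] {k l : L →ₗ[K] L} (h : ConditionKL k l) :
    ∃ q : L, l = k + LieAlgebra.ad K L q := by
  obtain ⟨q, hq⟩ := LieDerivation.IsKilling.exists_eq_ad h.derivation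
  have sub_eq_ad : l - k = LieAlgebra.ad K L q := by
    rw [← LieDerivation.coe_ad_apply_eq_ad_apply, hq]
    rfl
  exact ⟨q, sub_eq_iff_eq_add'.mp sub_eq_ad⟩

theorem exists_eq_smul_id_of_isIrreducible [IsAlgClosed K] {L M : Type*} [LieRing L]
    [LieAlgebra K L] [AddCommGroup M] [Module K M] [Module.Finite K M] [LieRingModule L M]
    [LieModule K L M] [LieModule.IsIrreducible K L M] (f : M →ₗ⁅K,L⁆ M) :
    ∃ c : K, f = c • LieModuleHom.id := by
  have : Nontrivial M := LieModule.nontrivial_of_isIrreducible K L M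
  obtain ⟨c, hc⟩ := Module.End.exists_eigenvalue (f : M →ₗ[K] M)
  obtain ⟨v, hv⟩ := hc.exists_hasEigenvector
  let eigenspace : LieSubmodule K L M := (f - c • LieModuleHom.id).ker
  have mem_eigenspace (x : M) : x ∈ eigenspace ↔ f x = c • x := by
    simp [eigenspace, sub_eq_zero]
  have eigenspace_ne_bot : eigenspace ≠ ⊥ := fun h_bot =>
    hv.2 <| (LieSubmodule.eq_bot_iff _).mp h_bot v <| (mem_eigenspace v).mpr hv.apply_eq_smul
  have eigenspace_eq_top : eigenspace = ⊤ := (eq_bot_or_eq_top _).resolve_left eigenspace_ne_bot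
  refine ⟨c, LieModuleHom.ext fun x => (mem_eigenspace x).mp ?_⟩
  exact eigenspace_eq_top ▸ LieSubmodule.mem_top x

theorem simple_complex_fibre_classification_general [IsAlgClosed K] {g : Type*} [LieRing g]
    [LieAlgebra K g] [Module.Finite K g] [LieAlgebra.IsKilling K g] [LieAlgebra.IsSimple K g]
    {k l : g →ₗ[K] g} (h : ConditionKL k l) (s : g) :
    (∃ (c : K) (q : g), (∀ x : g, k x = c • x) ∧ (∀ x : g, l x = c • x + ⁅q, x⁆)) ∧
    (∃ (c : K) (s' : g) (ψ : g →ₗ[K] g) (r : g),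
      Function.Bijective (fun a : g => ψ a + r) ∧
      ∀ a b : g,
        ψ (affineBracket k l s a b) + r = ⁅ψ a + r, ψ b + r⁆ + c • (ψ b + r) + s') := by
  obtain ⟨c, hc⟩ := exists_eq_smul_id_of_isIrreducible h.centroidHom
  have hk (x : g) : k x = c • x := LieModuleHom.congr_fun hc x
  obtain ⟨q, rfl⟩ := h.exists_eq_add_ad
  refine ⟨⟨c, q, hk, fun x => ?_⟩, c, s + q - k q, LinearMap.id, q, ?_, fun a b => ?_⟩
  · rw [LinearMap.add_apply, hk, LieAlgebra.ad_apply]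
  · exact (Equiv.addRight q).bijective
  · simpa only [LinearMap.id_apply, hk] using affineBracket_add_ad_add k q s a b

end Field

/-- Proposition 4.2(2)(i): if `g` is a finite-dimensional simple complex Lie
algebra and `k`, `l` satisfy condition (kl), then `k = c • id` for a scalar
`c` and `l = c • id + ad_q` for some `q ∈ g`; consequently every Lie affgebra
with fibre `g` is isomorphic (via an affine bijection) to one with bracket
`{a,b} = ⁅a,b⁆ + c • b + s'`. -/
theorem simple_complex_fibre_classification
    {g : Type*} [LieRing g] [LieAlgebra ℂ g] [Module.Finite ℂ g]
    [LieAlgebra.IsSimple ℂ g]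
    (k l : g →ₗ[ℂ] g)
    (hkl : ∀ a b : g, l ⁅a, b⁆ = ⁅l a, b⁆ - ⁅a, k b⁆ + ⁅a, l b⁆)
    (s : g) (br : g → g → g)
    (hbr : ∀ a b : g, br a b = ⁅a, b⁆ + k a + l (b - a) + s) :
    (∃ (c : ℂ) (q : g),
        (∀ x : g, k x = c • x) ∧ (∀ x : g, l x = c • x + ⁅q, x⁆)) ∧
    (∃ (c : ℂ) (s' : g) (ψ : g →ₗ[ℂ] g) (r : g),
        Function.Bijective (fun a : g => ψ a + r) ∧
        ∀ a b : g,
          ψ (br a b) + r = ⁅ψ a + r, ψ b + r⁆ + c • (ψ b + r) + s') := by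
  obtain rfl : br = affineBracket k l s := funext₂ hbr
  exact simple_complex_fibre_classification_general hkl s
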